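/- arXiv:1007.4488 — 2 statements merged into one kernel-verified Lean document; each statement's English description precedes it below -/
import Mathlib

section
/- The Green operator N = Q⁻¹ : V₂ → V₂ is compact if and only if the inclusion j : D → V₂ of the Hilbert space D (equipped with the norm ‖u‖_D² = ‖Tu‖² + ‖T*u‖²) into V₂ is a compact operator. -/
open scoped LinearPMap

/-- `T'` is the restriction of the partially defined operator `T` to the subspaces `V` (source)
and `W` (target): the domain of `T'` consists exactly of the elements of `V` lying in the domain
of `T`, and the values of `T'` agree with those of `T` (in particular `T` maps `Dom T ∩ V`
into `W`). -/
def IsRestrictionOf {R E : Type*} [Ring R] [AddCommGroup E] [Module R E]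
    (T : E →ₗ.[R] E) (V W : Submodule R E) (T' : ↥V →ₗ.[R] ↥W) : Prop :=
  (∀ u : V, u ∈ T'.domain ↔ (u : E) ∈ T.domain) ∧
  ∀ (u : V) (hu : u ∈ T'.domain) (hu' : (u : E) ∈ T.domain),
    ((T' ⟨u, hu⟩ : W) : E) = T ⟨(u : E), hu'⟩

/-!
Put `d u = (T u, T* u)`, so that `‖d u‖ = ‖u‖_D` and `⟪Q u, v⟫ = ⟪d u, d v⟫`, i.e. `Q ⊆ d* d`.
For `u ∈ R(Q)` this gives `‖d (N u)‖² = ⟪u, N u⟫`, so `N` maps small vectors of `R(Q)` into the unit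
ball of `D`; and the Cauchy–Schwarz inequality applied to `‖u‖² = ⟪d (N u), d u⟫` gives
`‖u‖³ ≤ ‖N u‖ ‖d u‖²`, so the inverse of `N` is uniformly continuous on the image of the unit ball
of `D`. The first fact passes to all small vectors because `N` vanishes on `R(Q)ᗮ`: following
von Neumann and Gaffney, `1 + Q` is onto, which for the nonnegative operator `Q` forces
`R(Q)ᗮ ⊆ ker Q`.
-/

open Filter Metric Set Topology
open scoped InnerProductSpace

theorem totallyBounded_of_totallyBounded_image {α β : Type*} [PseudoMetricSpace α]
    [PseudoMetricSpace β] {f : α → β} {s : Set α} (hs : TotallyBounded (f '' s))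
    (hf : ∀ ε > 0, ∃ δ > 0, ∀ x ∈ s, ∀ y ∈ s, dist (f x) (f y) < δ → dist x y < ε) :
    TotallyBounded s := by
  refine Metric.totallyBounded_iff.2 fun ε hε ↦ ?_
  obtain ⟨δ, hδ, hdist⟩ := hf ε hε
  obtain ⟨t, htfs, ht, hcover⟩ := totallyBounded_iff_subset.1 hs _ (dist_mem_uniformity hδ)
  obtain ⟨t, hts, ht', rfl⟩ := exists_subset_image_finite_and.1 ⟨t, htfs, ht, rfl⟩
  refine ⟨t, ht', fun x hx ↦ ?_⟩
  obtain ⟨_, ⟨y, hy, rfl⟩, hxy⟩ := mem_iUnion₂.1 (hcover (mem_image_of_mem f hx))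
  exact mem_iUnion₂.2 ⟨y, hy, hdist x hx y (hts hy) hxy⟩

section Orthogonal

variable {𝕜 E F : Type*} [RCLike 𝕜]
  [NormedAddCommGroup E] [InnerProductSpace 𝕜 E] [CompleteSpace E]
  [NormedAddCommGroup F] [NormedSpace 𝕜 F]

theorem mapsTo_ball_of_mapsTo_ball_inter {R : Submodule 𝕜 E} {N : E →L[𝕜] F}
    (hN : ∀ u ∈ Rᗮ, N u = 0) {K : Set F} (hK : IsClosed K) {r : ℝ}
    (hball : MapsTo N (ball 0 r ∩ R) K) : MapsTo N (ball 0 r) K := by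
  intro u hu
  set v := R.topologicalClosure.starProjection u
  have hNv : N u = N v := by
    have horth := R.topologicalClosure.sub_starProjection_mem_orthogonal u
    rw [Submodule.orthogonal_closure] at horth
    exact sub_eq_zero.1 (by rw [← map_sub, hN _ horth])
  have hv : v ∈ ball (0 : E) r := by
    rw [mem_ball_zero_iff] at hu ⊢
    exact (R.topologicalClosure.norm_starProjection_apply_le u).trans_lt hu
  have hvR : v ∈ closure (R : Set E) := R.topologicalClosure.starProjection_apply_mem u
  rw [hNv, ← hK.closure_eq]
  exact map_mem_closure N.continuous (isOpen_ball.inter_closure ⟨hv, hvR⟩) hball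

end Orthogonal

section Green

variable {𝕜 F W : Type*} [RCLike 𝕜] [NormedAddCommGroup F] [InnerProductSpace 𝕜 F]
  [NormedAddCommGroup W] [InnerProductSpace 𝕜 W]

/-- `N` is the Green operator of `L`: the inverse of `L` on its range, with values in that range,
and zero on the kernel of `L`. -/
structure IsGreenOperator (L : F →ₗ.[𝕜] F) (N : F →L[𝕜] F) : Prop where
  apply_eq_zero : ∀ ⦃u⦄, (u, 0) ∈ L.graph → N u = 0
  mem_graph : ∀ u ∈ LinearMap.range L.toFun, (N u, u) ∈ L.graph
  apply_mem_range : ∀ u ∈ LinearMap.range L.toFun, N u ∈ LinearMap.range L.toFun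

/-- `L` represents the sesquilinear form `⟪d u, d v⟫`: if `d` is densely defined, this says
`L ⊆ d* d`. -/
def RepresentsEnergy (d : F →ₗ.[𝕜] W) (L : F →ₗ.[𝕜] F) : Prop :=
  ∀ ⦃x y⦄, (x, y) ∈ L.graph →
    ∃ z, (x, z) ∈ d.graph ∧ ∀ ⦃v w⦄, (v, w) ∈ d.graph → ⟪y, v⟫_𝕜 = ⟪z, w⟫_𝕜

/-- The unit ball of the subspace `Dom d ∩ R` for the energy seminorm `‖d u‖`. -/
def energyBall (d : F →ₗ.[𝕜] W) (R : Submodule 𝕜 F) : Set F :=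
  {u | u ∈ R ∧ ∃ w, (u, w) ∈ d.graph ∧ ‖w‖ ≤ 1}

theorem mem_graph_zero_of_mem_orthogonal_range {L : F →ₗ.[𝕜] F}
    (hnonneg : ∀ ⦃x y⦄, (x, y) ∈ L.graph → 0 ≤ RCLike.re ⟪y, x⟫_𝕜)
    (hsurj : ∀ z, ∃ y, (y, z - y) ∈ L.graph) {x : F} (hx : x ∈ (LinearMap.range L.toFun)ᗮ) :
    (x, 0) ∈ L.graph := by
  obtain ⟨y, hy⟩ := hsurj x
  have horth : ⟪x - y, x⟫_𝕜 = 0 := hx _ (L.mem_range_iff.2 ⟨y, hy⟩)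
  have hzero : x - y = 0 := by
    refine (re_inner_self_nonpos (𝕜 := 𝕜)).1 ?_
    rw [inner_sub_right, horth, zero_sub, map_neg, neg_nonpos]
    exact hnonneg hy
  rwa [hzero, ← sub_eq_zero.1 hzero] at hy

variable {d : F →ₗ.[𝕜] W} {L : F →ₗ.[𝕜] F} {N : F →L[𝕜] F}

theorem RepresentsEnergy.exists_norm_sq_eq (hL : RepresentsEnergy d L) {x y : F}
    (hxy : (x, y) ∈ L.graph) : ∃ z, (x, z) ∈ d.graph ∧ ‖z‖ ^ 2 = RCLike.re ⟪y, x⟫_𝕜 := by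
  obtain ⟨z, hz, hform⟩ := hL hxy
  exact ⟨z, hz, by rw [hform hz, inner_self_eq_norm_sq]⟩

theorem RepresentsEnergy.re_inner_nonneg (hL : RepresentsEnergy d L) ⦃x y : F⦄
    (hxy : (x, y) ∈ L.graph) : 0 ≤ RCLike.re ⟪y, x⟫_𝕜 := by
  obtain ⟨z, -, hz⟩ := hL.exists_norm_sq_eq hxy
  exact hz ▸ sq_nonneg ‖z‖

theorem RepresentsEnergy.norm_pow_three_le (hL : RepresentsEnergy d L) (hN : IsGreenOperator L N)
    {u : F} {w : W} (hu : u ∈ LinearMap.range L.toFun) (hw : (u, w) ∈ d.graph) :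
    ‖u‖ ^ 3 ≤ ‖N u‖ * ‖w‖ ^ 2 := by
  obtain ⟨z, hz, hform⟩ := hL (hN.mem_graph u hu)
  have hzsq : ‖z‖ ^ 2 ≤ ‖u‖ * ‖N u‖ := by
    rw [← inner_self_eq_norm_sq (𝕜 := 𝕜), ← hform hz]
    exact re_inner_le_norm u (N u)
  have husq : ‖u‖ ^ 2 ≤ ‖z‖ * ‖w‖ := by
    rw [← inner_self_eq_norm_sq (𝕜 := 𝕜), hform hw]
    exact re_inner_le_norm z w
  rcases (norm_nonneg u).eq_or_lt with hzero | hpos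
  · rw [← hzero, zero_pow three_ne_zero]
    positivity
  · refine le_of_mul_le_mul_left ?_ hpos
    calc ‖u‖ * ‖u‖ ^ 3 = (‖u‖ ^ 2) ^ 2 := by ring
      _ ≤ (‖z‖ * ‖w‖) ^ 2 := by gcongr
      _ = ‖z‖ ^ 2 * ‖w‖ ^ 2 := by ring
      _ ≤ ‖u‖ * ‖N u‖ * ‖w‖ ^ 2 := by gcongr
      _ = ‖u‖ * (‖N u‖ * ‖w‖ ^ 2) := by ring

theorem RepresentsEnergy.apply_mem_energyBall (hL : RepresentsEnergy d L)
    (hN : IsGreenOperator L N) {u : F} (hu : u ∈ LinearMap.range L.toFun)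
    (hle : ‖u‖ * ‖N u‖ ≤ 1) : N u ∈ energyBall d (LinearMap.range L.toFun) := by
  obtain ⟨z, hz, hzsq⟩ := hL.exists_norm_sq_eq (hN.mem_graph u hu)
  refine ⟨hN.apply_mem_range u hu, z, hz, ?_⟩
  rw [← sq_le_one_iff₀ (norm_nonneg z), hzsq]
  exact (re_inner_le_norm u (N u)).trans hle

theorem RepresentsEnergy.energyBall_subset_closedBall (hL : RepresentsEnergy d L)
    (hN : IsGreenOperator L N) :
    energyBall d (LinearMap.range L.toFun) ⊆ closedBall 0 √‖N‖ := by
  rintro u ⟨hu, w, hw, hw1⟩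
  rw [mem_closedBall_zero_iff]
  rcases (norm_nonneg u).eq_or_lt with hzero | hpos
  · exact hzero ▸ Real.sqrt_nonneg _
  · refine Real.le_sqrt_of_sq_le (le_of_mul_le_mul_left ?_ hpos)
    calc ‖u‖ * ‖u‖ ^ 2 = ‖u‖ ^ 3 := by ring
      _ ≤ ‖N u‖ * ‖w‖ ^ 2 := hL.norm_pow_three_le hN hu hw
      _ ≤ ‖N‖ * ‖u‖ * 1 ^ 2 := by gcongr; exact N.le_opNorm u
      _ = ‖u‖ * ‖N‖ := by ring

theorem RepresentsEnergy.norm_sub_pow_three_le (hL : RepresentsEnergy d L)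
    (hN : IsGreenOperator L N) {u v : F} (hu : u ∈ energyBall d (LinearMap.range L.toFun))
    (hv : v ∈ energyBall d (LinearMap.range L.toFun)) :
    ‖u - v‖ ^ 3 ≤ 4 * ‖N u - N v‖ := by
  obtain ⟨huR, w, hw, hw1⟩ := hu
  obtain ⟨hvR, w', hw', hw'1⟩ := hv
  have hww' : ‖w - w'‖ ≤ 2 := (norm_sub_le w w').trans (by linarith)
  calc ‖u - v‖ ^ 3 ≤ ‖N (u - v)‖ * ‖w - w'‖ ^ 2 :=
        hL.norm_pow_three_le hN (sub_mem huR hvR) (sub_mem hw hw')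
    _ ≤ ‖N (u - v)‖ * 2 ^ 2 := by gcongr
    _ = 4 * ‖N u - N v‖ := by rw [map_sub]; ring

theorem RepresentsEnergy.totallyBounded_energyBall (hL : RepresentsEnergy d L)
    (hN : IsGreenOperator L N) (hcpt : IsCompactOperator N) :
    TotallyBounded (energyBall d (LinearMap.range L.toFun)) := by
  have himage : TotallyBounded (N '' closedBall 0 √‖N‖) :=
    (IsCompactOperator.isCompact_closure_image_closedBall (f := N.toLinearMap) hcpt
      _).totallyBounded.subset subset_closure
  refine totallyBounded_of_totallyBounded_image
    (himage.subset (image_mono (hL.energyBall_subset_closedBall hN))) fun ε hε ↦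
      ⟨ε ^ 3 / 4, by positivity, fun u hu v hv huv ↦ ?_⟩
  rw [dist_eq_norm] at huv ⊢
  refine lt_of_pow_lt_pow_left₀ 3 hε.le ?_
  linarith [hL.norm_sub_pow_three_le hN hu hv]

theorem RepresentsEnergy.isCompactOperator [CompleteSpace F] (hL : RepresentsEnergy d L)
    (hN : IsGreenOperator L N) (hsurj : ∀ z, ∃ y, (y, z - y) ∈ L.graph)
    (hball : IsCompact (closure (energyBall d (LinearMap.range L.toFun)))) :
    IsCompactOperator N := by
  have hsmall : ∀ᶠ u in 𝓝 (0 : F), ‖u‖ * ‖N u‖ < 1 :=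
    ContinuousAt.eventually_lt (by fun_prop) continuousAt_const (by simp)
  obtain ⟨r, hr, hrsmall⟩ := eventually_nhds_iff_ball.1 hsmall
  refine ⟨_, hball, mem_of_superset (ball_mem_nhds 0 hr) ?_⟩
  refine mapsTo_ball_of_mapsTo_ball_inter (R := LinearMap.range L.toFun) (fun u hu ↦ ?_)
    isClosed_closure fun u ⟨hur, hu⟩ ↦ ?_
  · exact hN.apply_eq_zero (mem_graph_zero_of_mem_orthogonal_range hL.re_inner_nonneg hsurj hu)
  · exact subset_closure (hL.apply_mem_energyBall hN hu (hrsmall u hur).le)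

theorem RepresentsEnergy.isCompactOperator_iff [CompleteSpace F] (hL : RepresentsEnergy d L)
    (hN : IsGreenOperator L N) (hsurj : ∀ z, ∃ y, (y, z - y) ∈ L.graph) :
    IsCompactOperator N ↔ IsCompact (closure (energyBall d (LinearMap.range L.toFun))) :=
  ⟨fun hcpt ↦ TotallyBounded.isCompact_of_isClosed
      (TotallyBounded.closure (hL.totallyBounded_energyBall hN hcpt)) isClosed_closure,
    hL.isCompactOperator hN hsurj⟩

end Green

section L2Prod

variable {𝕜 E F G : Type*} [RCLike 𝕜] [NormedAddCommGroup E] [InnerProductSpace 𝕜 E]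
  [AddCommGroup F] [Module 𝕜 F] [NormedAddCommGroup G] [InnerProductSpace 𝕜 G]

/-- The operator `u ↦ (B u, S u)` on `Dom B ∩ Dom S`, with values in the Hilbert sum. -/
def l2Prod (B : F →ₗ.[𝕜] G) (S : F →ₗ.[𝕜] E) : F →ₗ.[𝕜] WithLp 2 (G × E) where
  domain := B.domain ⊓ S.domain
  toFun := (WithLp.linearEquiv 2 𝕜 (G × E)).symm.toLinearMap ∘ₗ
    (B.toFun ∘ₗ Submodule.inclusion inf_le_left).prod
      (S.toFun ∘ₗ Submodule.inclusion inf_le_right)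

theorem mem_graph_l2Prod_iff {B : F →ₗ.[𝕜] G} {S : F →ₗ.[𝕜] E} {u : F} {w : WithLp 2 (G × E)} :
    (u, w) ∈ (l2Prod B S).graph ↔ (u, w.fst) ∈ B.graph ∧ (u, w.snd) ∈ S.graph := by
  simp only [LinearPMap.mem_graph_iff]
  constructor
  · rintro ⟨x, rfl, rfl⟩
    exact ⟨⟨⟨x, x.2.1⟩, rfl, rfl⟩, ⟨⟨x, x.2.2⟩, rfl, rfl⟩⟩
  · rintro ⟨⟨⟨_, hxB⟩, rfl, hx⟩, ⟨⟨x, hxS⟩, rfl, hy⟩⟩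
    exact ⟨⟨x, hxB, hxS⟩, rfl, WithLp.ofLp_injective 2 (Prod.ext hx hy)⟩

end L2Prod

section HilbertComplex

variable {𝕜 E F G : Type*} [RCLike 𝕜] [NormedAddCommGroup E] [InnerProductSpace 𝕜 E]
  [NormedAddCommGroup F] [InnerProductSpace 𝕜 F] [NormedAddCommGroup G] [InnerProductSpace 𝕜 G]

theorem energyBall_l2Prod (B : F →ₗ.[𝕜] G) (S : F →ₗ.[𝕜] E) (R : Submodule 𝕜 F) :
    energyBall (l2Prod B S) R = {u | ∃ (hB : u ∈ B.domain) (hS : u ∈ S.domain),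
      u ∈ R ∧ ‖B ⟨u, hB⟩‖ ^ 2 + ‖S ⟨u, hS⟩‖ ^ 2 ≤ 1} := by
  ext u
  simp only [energyBall, mem_graph_l2Prod_iff, mem_ofPred_eq]
  constructor
  · rintro ⟨hu, w, ⟨hB, hS⟩, hw⟩
    have hBu := (B.image_iff (B.mem_domain_of_mem_graph hB)).2 hB
    have hSu := (S.image_iff (S.mem_domain_of_mem_graph hS)).2 hS
    refine ⟨B.mem_domain_of_mem_graph hB, S.mem_domain_of_mem_graph hS, hu, ?_⟩
    rwa [← hBu, ← hSu, ← WithLp.prod_norm_sq_eq_of_L2, sq_le_one_iff₀ (norm_nonneg w)]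
  · rintro ⟨hB, hS, hu, hle⟩
    refine ⟨hu, WithLp.toLp 2 (B ⟨u, hB⟩, S ⟨u, hS⟩),
      ⟨B.mem_graph ⟨u, hB⟩, S.mem_graph ⟨u, hS⟩⟩, ?_⟩
    rwa [← sq_le_one_iff₀ (norm_nonneg _), WithLp.prod_norm_sq_eq_of_L2]

/-- The segment `A : E ⇀ F`, `B : F ⇀ G` of a Hilbert complex: closed densely defined operators
with `range A ⊆ ker B`. -/
structure IsHilbertComplex (A : E →ₗ.[𝕜] F) (B : F →ₗ.[𝕜] G) : Prop where
  dense_left : Dense (A.domain : Set E)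
  dense_right : Dense (B.domain : Set F)
  isClosed_left : A.IsClosed
  isClosed_right : B.IsClosed
  comp_eq_zero : ∀ ⦃a f⦄, (a, f) ∈ A.graph → (f, 0) ∈ B.graph

/-- `L = B* B + A A*` with its natural domain, on which `B u ∈ Dom B*` and `A* u ∈ Dom A`. -/
def IsHodgeLaplacian [CompleteSpace E] [CompleteSpace F] (A : E →ₗ.[𝕜] F) (B : F →ₗ.[𝕜] G)
    (L : F →ₗ.[𝕜] F) : Prop :=
  ∀ x y, (x, y) ∈ L.graph ↔ ∃ g e y₁ y₂, (x, g) ∈ B.graph ∧ (g, y₁) ∈ B†.graph ∧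
    (x, e) ∈ A†.graph ∧ (e, y₂) ∈ A.graph ∧ y₁ + y₂ = y

/-- The kernel of a partially defined operator, as a subspace of the ambient space. -/
def ambientKer (B : F →ₗ.[𝕜] G) : Submodule 𝕜 F :=
  B.graph.comap (LinearMap.inl 𝕜 F G)

theorem isClosed_ambientKer {B : F →ₗ.[𝕜] G} (hB : B.IsClosed) :
    IsClosed (ambientKer B : Set F) :=
  IsClosed.preimage (f := fun x : F ↦ (x, (0 : G))) (by fun_prop) hB

theorem mem_adjoint_graph_iff [CompleteSpace E] {A : E →ₗ.[𝕜] F}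
    (hA : Dense (A.domain : Set E)) {x : F} {y : E} :
    (x, y) ∈ A†.graph ↔ ∀ ⦃a f⦄, (a, f) ∈ A.graph → ⟪y, a⟫_𝕜 = ⟪x, f⟫_𝕜 := by
  rw [LinearPMap.adjoint_graph_eq_graph_adjoint hA, Submodule.mem_adjoint_iff]
  refine forall₃_congr fun a f _ ↦ ?_
  rw [sub_eq_zero, eq_comm, ← inner_conj_symm a, ← inner_conj_symm f,
    (starRingEnd 𝕜).injective.eq_iff]

theorem adjoint_graph_snd_mem_orthogonal_ambientKer [CompleteSpace F] {B : F →ₗ.[𝕜] G}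
    (hB : Dense (B.domain : Set F)) {g : G} {y : F} (hgy : (g, y) ∈ B†.graph) :
    y ∈ (ambientKer B)ᗮ := by
  rw [Submodule.mem_orthogonal']
  intro x hx
  have hx0 : (x, (0 : G)) ∈ B.graph := hx
  rw [(mem_adjoint_graph_iff hB).1 hgy hx0, inner_zero_right]

/-- The orthogonal decomposition `(f, g) = (x, y) + (f - x, g - y)` along the graph of `A`. -/
theorem exists_mem_graph_sub_mem_adjoint_graph [CompleteSpace E] [CompleteSpace F]
    {A : E →ₗ.[𝕜] F} (hd : Dense (A.domain : Set E)) (hc : A.IsClosed) (f : E) (g : F) :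
    ∃ x y, (x, y) ∈ A.graph ∧ (y - g, f - x) ∈ A†.graph := by
  let Γ : Submodule 𝕜 (WithLp 2 (E × F)) :=
    A.graph.comap (WithLp.prodContinuousLinearEquiv 2 𝕜 E F).toLinearMap
  have hΓ : IsClosed (Γ : Set (WithLp 2 (E × F))) :=
    hc.preimage (WithLp.prodContinuousLinearEquiv 2 𝕜 E F).continuous
  have : CompleteSpace Γ := hΓ.completeSpace_coe
  obtain ⟨p, hp, q, hq, hpq⟩ := Γ.exists_add_mem_mem_orthogonal (WithLp.toLp 2 (f, g))
  obtain rfl : q = WithLp.toLp 2 (f, g) - p := eq_sub_of_add_eq' hpq.symm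
  refine ⟨p.fst, p.snd, hp, (mem_adjoint_graph_iff hd).2 fun a b hab ↦ ?_⟩
  have horth : ⟪f - p.fst, a⟫_𝕜 + ⟪g - p.snd, b⟫_𝕜 = 0 :=
    Γ.inner_left_of_mem_orthogonal (u := WithLp.toLp 2 (a, b)) hab hq
  rw [← neg_sub g, inner_neg_left]
  exact eq_neg_of_add_eq_zero_left horth

variable {A : E →ₗ.[𝕜] F} {B : F →ₗ.[𝕜] G} {L : F →ₗ.[𝕜] F}

theorem isHodgeLaplacian_of_domain_of_apply [CompleteSpace E] [CompleteSpace F]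
    (hdom : ∀ x, x ∈ L.domain ↔ ∃ (hB : x ∈ B.domain) (hA : x ∈ (A†).domain),
      B ⟨x, hB⟩ ∈ (B†).domain ∧ A† ⟨x, hA⟩ ∈ A.domain)
    (happly : ∀ (x : F) (hx : x ∈ L.domain) (hB : x ∈ B.domain) (hA : x ∈ (A†).domain)
      (hB' : B ⟨x, hB⟩ ∈ (B†).domain) (hA' : A† ⟨x, hA⟩ ∈ A.domain),
      L ⟨x, hx⟩ = B† ⟨B ⟨x, hB⟩, hB'⟩ + A ⟨A† ⟨x, hA⟩, hA'⟩) :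
    IsHodgeLaplacian A B L := by
  intro x y
  simp only [LinearPMap.mem_graph_iff]
  constructor
  · rintro ⟨⟨x, hx⟩, rfl, rfl⟩
    obtain ⟨hB, hA, hB', hA'⟩ := (hdom x).1 hx
    exact ⟨_, _, _, _, ⟨⟨x, hB⟩, rfl, rfl⟩, ⟨⟨_, hB'⟩, rfl, rfl⟩, ⟨⟨x, hA⟩, rfl, rfl⟩,
      ⟨⟨_, hA'⟩, rfl, rfl⟩, (happly x hx hB hA hB' hA').symm⟩
  · rintro ⟨_, _, _, _, ⟨⟨_, hB⟩, rfl, rfl⟩, ⟨⟨_, hB'⟩, rfl, rfl⟩, ⟨⟨x, hA⟩, rfl, rfl⟩,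
      ⟨⟨_, hA'⟩, rfl, rfl⟩, rfl⟩
    have hx := (hdom x).2 ⟨hB, hA, hB', hA'⟩
    exact ⟨⟨x, hx⟩, rfl, happly x hx hB hA hB' hA'⟩

theorem IsHodgeLaplacian.representsEnergy [CompleteSpace E] [CompleteSpace F]
    (hL : IsHodgeLaplacian A B L) (hA : Dense (A.domain : Set E))
    (hB : Dense (B.domain : Set F)) : RepresentsEnergy (l2Prod B A†) L := by
  intro x y hxy
  obtain ⟨g, e, y₁, y₂, hxg, hgy₁, hxe, hey₂, rfl⟩ := (hL x y).1 hxy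
  refine ⟨WithLp.toLp 2 (g, e), mem_graph_l2Prod_iff.2 ⟨hxg, hxe⟩, fun v w hvw ↦ ?_⟩
  obtain ⟨hvB, hvA⟩ := mem_graph_l2Prod_iff.1 hvw
  have hBB : ⟪y₁, v⟫_𝕜 = ⟪g, w.fst⟫_𝕜 := (mem_adjoint_graph_iff hB).1 hgy₁ hvB
  have hAA : ⟪w.snd, e⟫_𝕜 = ⟪v, y₂⟫_𝕜 := (mem_adjoint_graph_iff hA).1 hvA hey₂
  rw [inner_add_left, hBB, ← inner_conj_symm y₂ v, ← hAA, inner_conj_symm]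
  rfl

theorem IsHilbertComplex.adjoint_graph_of_mem_orthogonal_ambientKer [CompleteSpace E]
    (hAB : IsHilbertComplex A B) {x : F} (hx : x ∈ (ambientKer B)ᗮ) : (x, 0) ∈ A†.graph := by
  refine (mem_adjoint_graph_iff hAB.dense_left).2 fun a f haf ↦ ?_
  rw [inner_zero_left, Submodule.inner_left_of_mem_orthogonal (hAB.comp_eq_zero haf) hx]

variable [CompleteSpace E] [CompleteSpace F]

theorem IsHilbertComplex.exists_laplacian_eq_sub_of_mem_ambientKer (hAB : IsHilbertComplex A B)
    (hL : IsHodgeLaplacian A B L) {p : F} (hp : p ∈ ambientKer B) :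
    ∃ y, (y, p - y) ∈ L.graph := by
  obtain ⟨a, f, haf, hadj⟩ :=
    exists_mem_graph_sub_mem_adjoint_graph hAB.dense_left hAB.isClosed_left 0 p
  have hker : (p - f, 0) ∈ B.graph := sub_mem hp (hAB.comp_eq_zero haf)
  have hadj' : (p - f, a) ∈ A†.graph := by simpa using neg_mem hadj
  refine ⟨p - f, (hL _ _).2 ⟨0, a, 0, f, hker, zero_mem _, hadj', haf, ?_⟩⟩
  abel

theorem IsHilbertComplex.exists_laplacian_eq_sub_of_mem_orthogonal_ambientKer [CompleteSpace G]
    (hAB : IsHilbertComplex A B) (hL : IsHodgeLaplacian A B L) {q : F}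
    (hq : q ∈ (ambientKer B)ᗮ) : ∃ y, (y, q - y) ∈ L.graph := by
  obtain ⟨y, g, hyg, hadj⟩ :=
    exists_mem_graph_sub_mem_adjoint_graph hAB.dense_right hAB.isClosed_right q 0
  rw [sub_zero] at hadj
  have hy : y ∈ (ambientKer B)ᗮ := by
    simpa using sub_mem hq (adjoint_graph_snd_mem_orthogonal_ambientKer hAB.dense_right hadj)
  exact ⟨y, (hL _ _).2 ⟨g, 0, q - y, 0, hyg, hadj,
    hAB.adjoint_graph_of_mem_orthogonal_ambientKer hy, zero_mem _, add_zero _⟩⟩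

theorem IsHilbertComplex.exists_laplacian_eq_sub [CompleteSpace G] (hAB : IsHilbertComplex A B)
    (hL : IsHodgeLaplacian A B L) (z : F) : ∃ y, (y, z - y) ∈ L.graph := by
  have : CompleteSpace (ambientKer B) :=
    (isClosed_ambientKer hAB.isClosed_right).completeSpace_coe
  obtain ⟨p, hp, q, hq, rfl⟩ := (ambientKer B).exists_add_mem_mem_orthogonal z
  obtain ⟨y₁, hy₁⟩ := hAB.exists_laplacian_eq_sub_of_mem_ambientKer hL hp
  obtain ⟨y₂, hy₂⟩ := hAB.exists_laplacian_eq_sub_of_mem_orthogonal_ambientKer hL hq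
  refine ⟨y₁ + y₂, ?_⟩
  rw [add_sub_add_comm]
  exact add_mem hy₁ hy₂

theorem stmt_10_general [CompleteSpace G] {N : F →L[𝕜] F} (hAB : IsHilbertComplex A B)
    (hL : IsHodgeLaplacian A B L) (hN : IsGreenOperator L N) :
    IsCompactOperator N ↔ IsCompact (closure {u : F | ∃ (hB : u ∈ B.domain)
      (hA : u ∈ (A†).domain), u ∈ LinearMap.range L.toFun ∧
        ‖B ⟨u, hB⟩‖ ^ 2 + ‖A† ⟨u, hA⟩‖ ^ 2 ≤ 1}) := by
  rw [← energyBall_l2Prod]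
  exact (hL.representsEnergy hAB.dense_left hAB.dense_right).isCompactOperator_iff hN
    (hAB.exists_laplacian_eq_sub hL)

end HilbertComplex

section Restriction

theorem IsRestrictionOf.mem_graph_iff {R E : Type*} [Ring R] [AddCommGroup E] [Module R E]
    {T : E →ₗ.[R] E} {V W : Submodule R E} {T' : V →ₗ.[R] W} (h : IsRestrictionOf T V W T')
    {u : V} {v : W} : (u, v) ∈ T'.graph ↔ ((u : E), (v : E)) ∈ T.graph := by
  simp only [LinearPMap.mem_graph_iff]
  constructor
  · rintro ⟨u, rfl, rfl⟩
    exact ⟨⟨u, (h.1 _).1 u.2⟩, rfl, (h.2 _ u.2 _).symm⟩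
  · rintro ⟨⟨_, hu⟩, rfl, huv⟩
    exact ⟨⟨u, (h.1 u).2 hu⟩, rfl, Subtype.ext ((h.2 u _ hu).trans huv)⟩

theorem IsRestrictionOf.exists_mem_graph {R E : Type*} [Ring R] [AddCommGroup E] [Module R E]
    {T : E →ₗ.[R] E} {V W : Submodule R E} {T' : V →ₗ.[R] W} (h : IsRestrictionOf T V W T')
    {u : V} {y : E} (huy : ((u : E), y) ∈ T.graph) : ∃ v : W, (u, v) ∈ T'.graph ∧ (v : E) = y := by
  have hu := T.mem_domain_of_mem_graph huy
  refine ⟨T' ⟨u, (h.1 u).2 hu⟩, T'.mem_graph ⟨u, (h.1 u).2 hu⟩, ?_⟩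
  rw [h.2 u _ hu]
  exact ((T.image_iff hu).2 huy).symm

theorem IsRestrictionOf.isClosed {R E : Type*} [CommRing R] [AddCommGroup E] [Module R E]
    [TopologicalSpace E] {T : E →ₗ.[R] E} {V W : Submodule R E} {T' : V →ₗ.[R] W}
    (h : IsRestrictionOf T V W T') (hT : T.IsClosed) : T'.IsClosed := by
  have hgraph : (T'.graph : Set (V × W)) = Prod.map (↑) (↑) ⁻¹' (T.graph : Set (E × E)) :=
    Set.ext fun _ ↦ h.mem_graph_iff
  rw [LinearPMap.IsClosed, hgraph]
  exact hT.preimage (by fun_prop)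

theorem IsHodgeLaplacian.restrict {𝕜 H : Type*} [RCLike 𝕜] [NormedAddCommGroup H]
    [InnerProductSpace 𝕜 H] [CompleteSpace H] {A B P : H →ₗ.[𝕜] H} {V₁ V₂ V₃ : Submodule 𝕜 H}
    [CompleteSpace V₁] [CompleteSpace V₂] {A' : V₁ →ₗ.[𝕜] V₂} {B' : V₂ →ₗ.[𝕜] V₃}
    {Q : V₂ →ₗ.[𝕜] V₂} (hP : IsHodgeLaplacian A B P) (hA : IsRestrictionOf A V₁ V₂ A')
    (hB : IsRestrictionOf B V₂ V₃ B') (hA' : IsRestrictionOf A† V₂ V₁ A'†)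
    (hB' : IsRestrictionOf B† V₃ V₂ B'†) (hQ : IsRestrictionOf P V₂ V₂ Q) :
    IsHodgeLaplacian A' B' Q := by
  intro x y
  rw [hQ.mem_graph_iff, hP]
  constructor
  · rintro ⟨g, e, y₁, y₂, hxg, hgy₁, hxe, hey₂, hy⟩
    obtain ⟨g, hxg', rfl⟩ := hB.exists_mem_graph hxg
    obtain ⟨y₁, hgy₁', rfl⟩ := hB'.exists_mem_graph hgy₁
    obtain ⟨e, hxe', rfl⟩ := hA'.exists_mem_graph hxe
    obtain ⟨y₂, hey₂', rfl⟩ := hA.exists_mem_graph hey₂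
    exact ⟨g, e, y₁, y₂, hxg', hgy₁', hxe', hey₂', Subtype.ext hy⟩
  · rintro ⟨g, e, y₁, y₂, hxg, hgy₁, hxe, hey₂, rfl⟩
    exact ⟨g, e, y₁, y₂, hB.mem_graph_iff.1 hxg, hB'.mem_graph_iff.1 hgy₁,
      hA'.mem_graph_iff.1 hxe, hA.mem_graph_iff.1 hey₂, rfl⟩

theorem setOf_energy_le_one_restrict {𝕜 H : Type*} [NormedField 𝕜] [NormedAddCommGroup H]
    [NormedSpace 𝕜 H] {B S : H →ₗ.[𝕜] H} {V W X : Submodule 𝕜 H} {B' : V →ₗ.[𝕜] W}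
    {S' : V →ₗ.[𝕜] X} (hB : IsRestrictionOf B V W B') (hS : IsRestrictionOf S V X S')
    (R : Submodule 𝕜 V) :
    {u : V | ∃ (hu : (u : H) ∈ B.domain) (hu' : (u : H) ∈ S.domain),
      u ∈ R ∧ ‖B ⟨u, hu⟩‖ ^ 2 + ‖S ⟨u, hu'⟩‖ ^ 2 ≤ 1} =
    {u : V | ∃ (hu : u ∈ B'.domain) (hu' : u ∈ S'.domain),
      u ∈ R ∧ ‖B' ⟨u, hu⟩‖ ^ 2 + ‖S' ⟨u, hu'⟩‖ ^ 2 ≤ 1} := by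
  ext u
  have hnorm : ∀ hu hu' hv hv', ‖B' ⟨u, hu⟩‖ ^ 2 + ‖S' ⟨u, hu'⟩‖ ^ 2 =
      ‖B ⟨u, hv⟩‖ ^ 2 + ‖S ⟨u, hv'⟩‖ ^ 2 := fun hu hu' hv hv' ↦ by
    rw [← hB.2 u hu hv, ← hS.2 u hu' hv', Submodule.coe_norm, Submodule.coe_norm]
  constructor
  · rintro ⟨hu, hu', huR, hle⟩
    exact ⟨(hB.1 u).2 hu, (hS.1 u).2 hu', huR, (hnorm _ _ hu hu').trans_le hle⟩
  · rintro ⟨hu, hu', huR, hle⟩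
    exact ⟨(hB.1 u).1 hu, (hS.1 u).1 hu', huR, (hnorm hu hu' _ _).symm.trans_le hle⟩

end Restriction

theorem stmt_10 {H : Type*} [NormedAddCommGroup H] [InnerProductSpace ℂ H] [CompleteSpace H]
    -- `T` is closed and densely defined, with range contained in `Dom T` and `T² = 0`
    (T : H →ₗ.[ℂ] H) (hTd : Dense (T.domain : Set H)) (hTc : T.IsClosed)
    (hTr : ∀ u : T.domain, T u ∈ T.domain)
    (hT2 : ∀ u : T.domain, T ⟨T u, hTr u⟩ = 0)
    -- `P = T*T + TT*` with its natural domain; `P` is self-adjoint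
    (P : H →ₗ.[ℂ] H)
    (hPdom : ∀ x : H, x ∈ P.domain ↔
      ∃ (h1 : x ∈ T.domain) (h2 : x ∈ (T†).domain),
        T ⟨x, h1⟩ ∈ (T†).domain ∧ T† ⟨x, h2⟩ ∈ T.domain)
    (hPval : ∀ (x : H) (hx : x ∈ P.domain) (h1 : x ∈ T.domain) (h2 : x ∈ (T†).domain)
      (h3 : T ⟨x, h1⟩ ∈ (T†).domain) (h4 : T† ⟨x, h2⟩ ∈ T.domain),
      P ⟨x, hx⟩ = T† ⟨T ⟨x, h1⟩, h3⟩ + T ⟨T† ⟨x, h2⟩, h4⟩)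
    (hPsa : IsSelfAdjoint P)
    -- the closed subspaces `V₁, V₂, V₃`
    (V₁ V₂ V₃ : Submodule ℂ H)
    (hV₁ : IsClosed (V₁ : Set H)) (hV₂ : IsClosed (V₂ : Set H)) (hV₃ : IsClosed (V₃ : Set H))
    [CompleteSpace V₁] [CompleteSpace V₂] [CompleteSpace V₃]
    -- `T₁ = T|_{V₁} : V₁ ⇀ V₂` and `T₂ = T|_{V₂} : V₂ ⇀ V₃`, densely defined with closed range
    (T₁ : ↥V₁ →ₗ.[ℂ] ↥V₂) (hT₁ : IsRestrictionOf T V₁ V₂ T₁)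
    (hT₁d : Dense (T₁.domain : Set V₁))
    (T₂ : ↥V₂ →ₗ.[ℂ] ↥V₃) (hT₂ : IsRestrictionOf T V₂ V₃ T₂)
    (hT₂d : Dense (T₂.domain : Set V₂))
    (hR₁ : IsClosed ((LinearMap.range T₁.toFun : Submodule ℂ V₂) : Set V₂))
    (hR₂ : IsClosed ((LinearMap.range T₂.toFun : Submodule ℂ V₃) : Set V₃))
    -- `S₂ = T*|_{V₂} : V₂ ⇀ V₁` and `S₃ = T*|_{V₃} : V₃ ⇀ V₂`; the adjoint of `T|_{V₁}` is
    -- `T*|_{V₂}` and the adjoint of `T|_{V₂}` is `T*|_{V₃}`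
    (S₂ : ↥V₂ →ₗ.[ℂ] ↥V₁) (hS₂ : IsRestrictionOf (T†) V₂ V₁ S₂)
    (S₃ : ↥V₃ →ₗ.[ℂ] ↥V₂) (hS₃ : IsRestrictionOf (T†) V₃ V₂ S₃)
    (hadj₁ : T₁† = S₂) (hadj₂ : T₂† = S₃)
    -- `Q = P|_{V₂}`
    (Q : ↥V₂ →ₗ.[ℂ] ↥V₂) (hQ : IsRestrictionOf P V₂ V₂ Q)
    -- `N = Q⁻¹` is the Green operator
    (N : V₂ →L[ℂ] V₂)
    (hN0 : ∀ u ∈ (LinearMap.ker Q.toFun).map Q.domain.subtype, N u = 0)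
    (hNR : ∀ u ∈ LinearMap.range Q.toFun, ∃ h : N u ∈ Q.domain,
      N u ∈ LinearMap.range Q.toFun ∧ Q ⟨N u, h⟩ = u) :
    -- `N` is compact iff the inclusion `j : D → V₂` is compact, i.e. iff the closed unit ball
    -- of `D = Dom T ∩ Dom T* ∩ R(Q)` for the norm `‖u‖_D² = ‖Tu‖² + ‖T*u‖²` is relatively
    -- compact in `V₂`
    (IsCompactOperator (⇑N : V₂ → V₂) ↔
      IsCompact (closure {u : V₂ | ∃ (h1 : (u : H) ∈ T.domain) (h2 : (u : H) ∈ (T†).domain),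
        u ∈ LinearMap.range Q.toFun ∧
          ‖T ⟨(u : H), h1⟩‖ ^ 2 + ‖T† ⟨(u : H), h2⟩‖ ^ 2 ≤ 1})) := by
  subst hadj₁ hadj₂
  have hcomplex : IsHilbertComplex T₁ T₂ :=
    { dense_left := hT₁d
      dense_right := hT₂d
      isClosed_left := hT₁.isClosed hTc
      isClosed_right := hT₂.isClosed hTc
      comp_eq_zero := fun a f haf ↦ hT₂.mem_graph_iff.2 <| by
        obtain ⟨a', -, ha'⟩ := T.mem_graph_iff.1 (hT₁.mem_graph_iff.1 haf)
        exact T.mem_graph_iff.2 ⟨⟨T a', hTr a'⟩, ha', hT2 a'⟩ }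
  have hlaplacian : IsHodgeLaplacian T₁ T₂ Q :=
    (isHodgeLaplacian_of_domain_of_apply hPdom hPval).restrict hT₁ hT₂ hS₂ hS₃ hQ
  have hgreen : IsGreenOperator Q N :=
    { apply_eq_zero := fun u hu ↦ by
        obtain ⟨v, rfl, hv⟩ := Q.mem_graph_iff.1 hu
        exact hN0 v ⟨v, hv, rfl⟩
      mem_graph := fun u hu ↦ by
        obtain ⟨hNu, -, hQN⟩ := hNR u hu
        exact Q.mem_graph_iff.2 ⟨⟨N u, hNu⟩, rfl, hQN⟩
      apply_mem_range := fun u hu ↦ (hNR u hu).2.1 }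
  rw [setOf_energy_le_one_restrict hT₂ hS₂]
  exact stmt_10_general hcomplex hlaplacian hgreen
end

section
/- Let A be a closed, densely defined linear operator from a complex Hilbert space H₁ to a complex Hilbert space H₂ with closed range R(A). Let H ⊆ R(A) be a closed subspace of finite codimension in R(A), and let S : H → H₁ be a compact linear operator taking values in Dom A with A(Sf) = f for all f ∈ H. Then there exists a compact linear operator T : R(A) → H₁ taking values in Dom A with A(Tf) = f for all f ∈ R(A). -/
open scoped LinearPMap

/-!
Algebraically, `S` extends to a linear right inverse of `A` on the whole range: correct an arbitrary
linear extension of `S` by an arbitrary right inverse of `A`. Every such extension is compact,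
because a linear map whose restriction to a closed subspace of finite codimension is compact
differs from a compact map by one that factors through a finite-dimensional Hausdorff quotient.
-/

section RightInverse

variable {𝕜 V W : Type*} [DivisionRing 𝕜] [AddCommGroup V] [Module 𝕜 V] [AddCommGroup W]
  [Module 𝕜 W]

theorem exists_rightInverse_domRestrict_eq (f : V →ₗ[𝕜] W) (hf : f.range = ⊤) {p : Submodule 𝕜 W}
    (s : p →ₗ[𝕜] V) (hs : f ∘ₗ s = p.subtype) :
    ∃ g : W →ₗ[𝕜] V, f ∘ₗ g = LinearMap.id ∧ g.domRestrict p = s := by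
  obtain ⟨r, hr⟩ := f.exists_rightInverse_of_surjective hf
  obtain ⟨e, he⟩ := s.exists_extend
  have hfr (x : W) : f (r x) = x := LinearMap.congr_fun hr x
  have hes (x : p) : e x = s x := LinearMap.congr_fun he x
  have hfs (x : p) : f (s x) = x := LinearMap.congr_fun hs x
  refine ⟨e + r ∘ₗ (LinearMap.id - f ∘ₗ e), ?_, ?_⟩
  · ext x
    simp [hfr]
  · ext x
    simp [hes, hfs]

end RightInverse

section Compact

variable {𝕜 E F : Type*} [NontriviallyNormedField 𝕜] [ProperSpace 𝕜]
  [AddCommGroup E] [Module 𝕜 E] [TopologicalSpace E] [IsTopologicalAddGroup E]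
  [ContinuousSMul 𝕜 E]
  [AddCommGroup F] [Module 𝕜 F] [TopologicalSpace F] [IsTopologicalAddGroup F]
  [ContinuousSMul 𝕜 F]

theorem isCompactOperator_of_le_ker {p : Submodule 𝕜 E} (hp : IsClosed (p : Set E)) [p.CoFG]
    {T : E →ₗ[𝕜] F} (hT : p ≤ T.ker) : IsCompactOperator T := by
  have : LocallyCompactSpace (E ⧸ p) := .of_finiteDimensional_of_complete 𝕜 (E ⧸ p)
  let T' : (E ⧸ p) →L[𝕜] F := (p.liftQ T hT).toContinuousLinearMap
  exact (isCompactOperator_of_locallyCompactSpace_rng T').comp_clm p.mkQL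

theorem isCompactOperator_of_domRestrict {p : Submodule 𝕜 E} (hp : IsClosed (p : Set E))
    [p.CoFG] {T : E →ₗ[𝕜] F} (hT : IsCompactOperator (T.domRestrict p)) :
    IsCompactOperator T := by
  obtain ⟨P, hP⟩ := Submodule.ClosedComplemented.of_finiteDimensional_quotient hp
  let R : E →ₗ[𝕜] F := T - T.domRestrict p ∘ₗ P
  have hR : p ≤ R.ker := fun x hx ↦ by simp [R, hP ⟨x, hx⟩]
  have hTPR : (T : E → F) = T.domRestrict p ∘ P + R := by
    ext x
    simp [R]
  rw [hTPR]
  exact (hT.comp_clm P).add (isCompactOperator_of_le_ker hp hR)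

end Compact

theorem coFG_submoduleOf_of_finiteDimensional_inf_orthogonal {𝕜 E : Type*} [RCLike 𝕜]
    [NormedAddCommGroup E] [InnerProductSpace 𝕜 E] {K V : Submodule 𝕜 E}
    [K.HasOrthogonalProjection] (hKV : K ≤ V) [FiniteDimensional 𝕜 ↥(V ⊓ Kᗮ)] :
    (K.submoduleOf V).CoFG := by
  have hfg : ((V ⊓ Kᗮ).submoduleOf V).FG := Module.Finite.iff_fg.mp <|
    Module.Finite.equiv (Submodule.submoduleOfEquivOfLe inf_le_left).symm
  refine Submodule.FG.cofg_of_codisjoint (codisjoint_iff.mpr ?_) hfg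
  rw [← Submodule.submoduleOf_sup_of_le inf_le_left hKV, sup_comm, inf_comm,
    Submodule.sup_orthogonal_inf_of_hasOrthogonalProjection hKV, Submodule.submoduleOf_self]

theorem stmt_12_general {𝕜 E F : Type*} [NontriviallyNormedField 𝕜] [ProperSpace 𝕜]
    [AddCommGroup E] [Module 𝕜 E] [TopologicalSpace E] [IsTopologicalAddGroup E]
    [ContinuousSMul 𝕜 E]
    [AddCommGroup F] [Module 𝕜 F] [TopologicalSpace F] [IsTopologicalAddGroup F]
    [ContinuousSMul 𝕜 F]
    (A : E →ₗ.[𝕜] F) {K : Submodule 𝕜 F} (hK : K ≤ A.toFun.range)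
    (hKc : IsClosed (K.submoduleOf A.toFun.range : Set A.toFun.range))
    (hcodim : (K.submoduleOf A.toFun.range).CoFG)
    (S : K →ₗ[𝕜] E) (hScpt : IsCompactOperator S) (hSdom : ∀ f : K, S f ∈ A.domain)
    (hSsol : ∀ f : K, A ⟨S f, hSdom f⟩ = f) :
    ∃ T : A.toFun.range →ₗ[𝕜] E, IsCompactOperator T ∧
      ∃ hdom : ∀ f : A.toFun.range, T f ∈ A.domain,
        ∀ f : A.toFun.range, A ⟨T f, hdom f⟩ = f := by
  let s : K.submoduleOf A.toFun.range →ₗ[𝕜] A.domain :=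
    S.codRestrict A.domain hSdom ∘ₗ Submodule.submoduleOfEquivOfLe hK
  have hs : A.toFun.rangeRestrict ∘ₗ s = (K.submoduleOf A.toFun.range).subtype := by
    ext f
    exact hSsol (Submodule.submoduleOfEquivOfLe hK f)
  obtain ⟨g, hAg, hgs⟩ := exists_rightInverse_domRestrict_eq _ A.toFun.range_rangeRestrict s hs
  let T : A.toFun.range →ₗ[𝕜] E := A.domain.subtype ∘ₗ g
  have hTcpt : IsCompactOperator (T.domRestrict (K.submoduleOf A.toFun.range)) := by
    have hTS : T.domRestrict (K.submoduleOf A.toFun.range) =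
        S ∘ₗ Submodule.submoduleOfEquivOfLe hK :=
      congrArg (A.domain.subtype ∘ₗ ·) hgs
    rw [hTS]
    exact hScpt.comp_clm (A.toFun.range.subtypeL.restrict fun _ hf ↦ hf)
  exact ⟨T, isCompactOperator_of_domRestrict hKc hTcpt, fun f ↦ (g f).2,
    fun f ↦ congrArg Subtype.val (LinearMap.congr_fun hAg f)⟩

/-- If `A` is a closed densely defined operator with closed range, `K` is a closed subspace of
finite codimension in `R(A)`, and `S : K → H₁` is a compact solution operator for `A` on `K`,
then there is a compact solution operator for `A` on all of `R(A)`. -/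
theorem stmt_12 {H₁ H₂ : Type*} [NormedAddCommGroup H₁] [InnerProductSpace ℂ H₁] [CompleteSpace H₁]
    [NormedAddCommGroup H₂] [InnerProductSpace ℂ H₂] [CompleteSpace H₂]
    (A : H₁ →ₗ.[ℂ] H₂) (hAd : Dense (A.domain : Set H₁)) (hAc : A.IsClosed)
    (hAr : IsClosed ((LinearMap.range A.toFun : Submodule ℂ H₂) : Set H₂))
    -- `K` is a closed subspace of finite codimension in `R(A)`
    (K : Submodule ℂ H₂) (hK : K ≤ LinearMap.range A.toFun) (hKc : IsClosed (K : Set H₂))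
    (hcodim : FiniteDimensional ℂ ↥(LinearMap.range A.toFun ⊓ Kᗮ))
    -- `S : K → H₁` is a compact solution operator on `K`
    (S : ↥K →ₗ[ℂ] H₁) (hScpt : IsCompactOperator (⇑S : K → H₁))
    (hSdom : ∀ f : K, S f ∈ A.domain)
    (hSsol : ∀ f : K, A ⟨S f, hSdom f⟩ = (f : H₂)) :
    ∃ Top : ↥(LinearMap.range A.toFun) →ₗ[ℂ] H₁,
      IsCompactOperator (⇑Top : LinearMap.range A.toFun → H₁) ∧
      ∃ hdom : ∀ f : LinearMap.range A.toFun, Top f ∈ A.domain,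
        ∀ f : LinearMap.range A.toFun, A ⟨Top f, hdom f⟩ = (f : H₂) := by
  have : CompleteSpace K := hKc.completeSpace_coe
  exact stmt_12_general A hK (hKc.preimage continuous_subtype_val)
    (coFG_submoduleOf_of_finiteDimensional_inf_orthogonal hK) S hScpt hSdom hSsol
end
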